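/- Let X be the punctured Möbius band with boundary circles C₁ and C₂. Suppose f : X → X is a boundary-preserving map with f(C₁) ⊆ C₂ and f(C₂) ⊆ C₁, such that the restriction, viewed as a map f|C₁ : C₁ → C₂, is essential, while the restriction f|C₂ : C₂ → ∂X is inessential. Then f is boundary-homotopic to a map g : X → X having exactly one fixed point. -/

import Mathlib

open Set

namespace PMB

/-- The square [0,1] × [−1,1] as a subspace of ℝ². -/
def Sq : Set (ℝ × ℝ) := Set.Icc 0 1 ×ˢ Set.Icc (-1) 1

/-- The identification (0,y) ∼ (1,−y) on the square. -/
def rel (p q : Sq) : Prop :=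
  (p : ℝ × ℝ) = (q : ℝ × ℝ) ∨
  ((p : ℝ × ℝ).1 = 0 ∧ (q : ℝ × ℝ).1 = 1 ∧ (p : ℝ × ℝ).2 = -(q : ℝ × ℝ).2) ∨
  ((p : ℝ × ℝ).1 = 1 ∧ (q : ℝ × ℝ).1 = 0 ∧ (q : ℝ × ℝ).2 = -(p : ℝ × ℝ).2)

/-- The Möbius band: the quotient of the square by the identification. -/
def M := Quot rel

instance : TopologicalSpace M := inferInstanceAs (TopologicalSpace (Quot rel))

/-- The quotient map. -/
def qm : Sq → M := Quot.mk rel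

/-- The open disc of radius 1/4 centred at (1/2, 0). -/
def Bdisc : Set (ℝ × ℝ) := Metric.ball (1/2, 0) (1/4)

/-- The circle of radius 1/4 centred at (1/2, 0). -/
def Scirc : Set (ℝ × ℝ) := Metric.sphere (1/2, 0) (1/4)

/-- The punctured Möbius band, as a subset of the Möbius band. -/
def Xset : Set M := {m | m ∉ qm '' {p : Sq | (p : ℝ × ℝ) ∈ Bdisc}}

/-- The punctured Möbius band as a topological space. -/
abbrev X : Type := ↥Xset

/-- The boundary circle of the Möbius band. -/
def C1 : Set X := {x | ∃ p : Sq, qm p = (x : M) ∧ ((p : ℝ × ℝ).2 = 1 ∨ (p : ℝ × ℝ).2 = -1)}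

/-- The boundary circle coming from the removed disc. -/
def C2 : Set X := {x | ∃ p : Sq, qm p = (x : M) ∧ (p : ℝ × ℝ) ∈ Scirc}

/-- The boundary of the punctured Möbius band. -/
def Bd : Set X := C1 ∪ C2

/-- A self-map of the punctured Möbius band is boundary-preserving if it sends ∂X into ∂X. -/
def BoundaryPreserving (f : C(X, X)) : Prop := MapsTo f Bd Bd

/-- Two self-maps are boundary-homotopic if there is a homotopy between them keeping
∂X inside ∂X at all times. -/
def BoundaryHomotopic (f g : C(X, X)) : Prop :=
  ∃ H : ContinuousMap.Homotopy f g, ∀ x : X, x ∈ Bd → ∀ t : unitInterval, H (t, x) ∈ Bd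

/-- A continuous map is inessential if it is homotopic to a constant map. -/
def Inessential {α β : Type*} [TopologicalSpace α] [TopologicalSpace β] (f : C(α, β)) : Prop :=
  ∃ b : β, ContinuousMap.Homotopic f (ContinuousMap.const α b)

/-- A continuous map is essential if it is not homotopic to a constant map. -/
def Essential {α β : Type*} [TopologicalSpace α] [TopologicalSpace β] (f : C(α, β)) : Prop :=
  ¬ Inessential f

/-- The restriction of a self-map of X to a subset `s` mapped into a subset `t`,
as a continuous map between the subspaces. -/
def restrictMap (f : C(X, X)) {s t : Set X} (h : MapsTo f s t) : C(s, t) :=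
  ⟨fun x => ⟨f x, h x.2⟩, Continuous.subtype_mk (f.continuous.comp continuous_subtype_val) _⟩


noncomputable section

/-- sup-norm distance to the centre of the hole -/
def NN (p : ℝ × ℝ) : ℝ := max |p.1 - 1/2| |p.2|

lemma continuous_NN : Continuous NN := by unfold NN; fun_prop

lemma mem_Sq {p : ℝ × ℝ} : p ∈ Sq ↔ (0 ≤ p.1 ∧ p.1 ≤ 1) ∧ (-1 ≤ p.2 ∧ p.2 ≤ 1) := by
  simp only [Sq, Set.mem_prod, Set.mem_Icc]

lemma dist_eq_NN (p : ℝ × ℝ) : dist p (1/2, 0) = NN p := by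
  simp [Prod.dist_eq, NN, Real.dist_eq]

lemma mem_Bdisc {p : ℝ × ℝ} : p ∈ Bdisc ↔ NN p < 1/4 := by
  rw [Bdisc, Metric.mem_ball, dist_eq_NN]

lemma mem_Scirc {p : ℝ × ℝ} : p ∈ Scirc ↔ NN p = 1/4 := by
  rw [Scirc, Metric.mem_sphere, dist_eq_NN]

lemma rel_equiv : Equivalence rel := by
  refine ⟨fun p => Or.inl rfl, ?_, ?_⟩
  · rintro p q (h | ⟨h1, h2, h3⟩ | ⟨h1, h2, h3⟩)
    · exact Or.inl h.symm
    · exact Or.inr (Or.inr ⟨h2, h1, h3⟩)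
    · exact Or.inr (Or.inl ⟨h2, h1, h3⟩)
  · rintro ⟨⟨a, b⟩, _⟩ ⟨⟨c, d⟩, _⟩ ⟨⟨e, f⟩, _⟩ h1 h2
    simp only [rel, Prod.mk.injEq] at h1 h2 ⊢
    grind

lemma qm_eq {p q : Sq} : qm p = qm q ↔ rel p q := by
  constructor
  · intro h
    have := Quot.eqvGen_exact h
    rwa [rel_equiv.eqvGen_iff] at this
  · exact fun h => Quot.sound h

lemma NN_rel {p q : Sq} (h : rel p q) : NN p = NN q := by
  obtain ⟨⟨a, b⟩, _⟩ := p
  obtain ⟨⟨c, d⟩, _⟩ := q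
  rcases h with h | ⟨h1, h2, h3⟩ | ⟨h1, h2, h3⟩
  · rw [h]
  · simp only at h1 h2 h3
    simp only [NN, h1, h2, h3, abs_neg]; norm_num
  · simp only at h1 h2 h3
    simp only [NN, h1, h2, h3, abs_neg]; norm_num

lemma continuous_qm : Continuous qm := continuous_quot_mk

/-- An embedding of the Möbius band into ℂ², used to see that it is Hausdorff. -/
def emb0 (p : Sq) : ℂ × ℂ :=
  (Complex.exp ((p : ℝ × ℝ).1 * (2 * Real.pi * Complex.I)),
    (p : ℝ × ℝ).2 * Complex.exp ((p : ℝ × ℝ).1 * (Real.pi * Complex.I)))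

lemma emb0_rel (p q : Sq) (h : rel p q) : emb0 p = emb0 q := by
  obtain ⟨⟨a, b⟩, _⟩ := p
  obtain ⟨⟨c, d⟩, _⟩ := q
  rcases h with h | ⟨h1, h2, h3⟩ | ⟨h1, h2, h3⟩
  · simp only [Prod.mk.injEq] at h
    simp [emb0, h.1, h.2]
  · simp only at h1 h2 h3
    simp [emb0, h1, h2, h3]
  · simp only at h1 h2 h3
    simp [emb0, h1, h2, h3]

lemma emb0_inj (p q : Sq) (h : emb0 p = emb0 q) : rel p q := by
  obtain ⟨⟨a, b⟩, hp⟩ := p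
  obtain ⟨⟨c, d⟩, hq⟩ := q
  rw [mem_Sq] at hp hq
  simp only at hp hq
  simp only [emb0, Prod.mk.injEq] at h
  obtain ⟨h1, h2⟩ := h
  rw [Complex.exp_eq_exp_iff_exists_int] at h1
  obtain ⟨n, hn⟩ := h1
  have hpi : (2 * Real.pi * Complex.I : ℂ) ≠ 0 := by
    simp [Real.pi_ne_zero]
  have h3 : (a : ℂ) = c + n := by
    apply mul_right_cancel₀ hpi
    rw [hn]; ring
  have h4 : a = c + n := by exact_mod_cast h3
  have n1 : (n : ℝ) ≤ 1 := by linarith [hp.1.2, hq.1.1]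
  have n2 : (-1 : ℝ) ≤ n := by linarith [hp.1.1, hq.1.2]
  have n1' : n ≤ 1 := by exact_mod_cast n1
  have n2' : -1 ≤ n := by exact_mod_cast n2
  have hne := Complex.exp_ne_zero
  obtain rfl | rfl | rfl : n = -1 ∨ n = 0 ∨ n = 1 := by omega
  · have ha : a = 0 := by push_cast at h4; linarith [hp.1.1, hq.1.2]
    have hc : c = 1 := by push_cast at h4; linarith [hp.1.1, hq.1.2]
    subst ha hc
    simp at h2
    refine Or.inr (Or.inl ⟨rfl, rfl, ?_⟩)
    exact_mod_cast h2
  · have ha : a = c := by push_cast at h4; linarith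
    subst ha
    have := mul_right_cancel₀ (hne _) h2
    refine Or.inl ?_
    simp only [Prod.mk.injEq, true_and]
    exact_mod_cast this
  · have ha : a = 1 := by push_cast at h4; linarith [hp.1.2, hq.1.1]
    have hc : c = 0 := by push_cast at h4; linarith [hp.1.2, hq.1.1]
    subst ha hc
    simp at h2
    refine Or.inr (Or.inr ⟨rfl, rfl, ?_⟩)
    exact_mod_cast h2.symm

def emb : M → ℂ × ℂ := Quot.lift emb0 emb0_rel

lemma continuous_emb : Continuous emb := by
  apply Continuous.quotient_lift (s := ⟨rel, rel_equiv⟩)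
  unfold emb0; fun_prop

lemma emb_inj : Function.Injective emb := by
  intro p q
  obtain ⟨p, rfl⟩ := Quot.exists_rep p
  obtain ⟨q, rfl⟩ := Quot.exists_rep q
  intro h
  exact Quot.sound (emb0_inj p q h)

instance : T2Space M := T2Space.of_injective_continuous emb_inj continuous_emb

/-- The square with the open hole removed. -/
def Q : Set (ℝ × ℝ) := {p | p ∈ Sq ∧ 1/4 ≤ NN p}

lemma isCompact_Sq : IsCompact Sq := isCompact_Icc.prod isCompact_Icc

lemma isCompact_Q : IsCompact Q :=
  isCompact_Sq.inter_right (isClosed_le continuous_const continuous_NN)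

instance : CompactSpace Q := isCompact_iff_compactSpace.mp isCompact_Q

lemma qm_mem {p : ℝ × ℝ} (h : p ∈ Q) : qm ⟨p, h.1⟩ ∈ Xset := by
  rintro ⟨q, hq, hqp⟩
  have := NN_rel (qm_eq.mp hqp)
  simp only [Set.mem_ofPred_eq, mem_Bdisc] at hq
  have h2 := h.2
  simp only at this
  linarith

def mkQ (p : Q) : X := ⟨qm ⟨p, p.2.1⟩, qm_mem p.2⟩

lemma continuous_mkQ : Continuous mkQ := by
  unfold mkQ
  apply Continuous.subtype_mk
  exact continuous_qm.comp (by fun_prop)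

lemma surj_mkQ : Function.Surjective mkQ := by
  rintro ⟨x, hx⟩
  obtain ⟨p, rfl⟩ := Quot.exists_rep x
  have : (p : ℝ × ℝ) ∈ Q := by
    refine ⟨p.2, ?_⟩
    by_contra h
    exact hx ⟨p, mem_Bdisc.mpr (not_le.mp h), rfl⟩
  exact ⟨⟨p, this⟩, rfl⟩

lemma memQ0 : ((0, 0) : ℝ × ℝ) ∈ Q := by
  refine ⟨mem_Sq.mpr (by norm_num), ?_⟩
  simp [NN]; norm_num [abs_of_pos]

open Classical in
/-- total version of the quotient map -/
def mk (p : ℝ × ℝ) : X := if h : p ∈ Q then mkQ ⟨p, h⟩ else mkQ ⟨(0, 0), memQ0⟩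

lemma mk_of {p : ℝ × ℝ} (h : p ∈ Q) : mk p = mkQ ⟨p, h⟩ := by simp [mk, h]

lemma continuousOn_mk : ContinuousOn mk Q := by
  rw [continuousOn_iff_continuous_domRestrict]
  convert continuous_mkQ using 1
  ext p
  simp [mk_of p.2]

lemma exists_mk (x : X) : ∃ p ∈ Q, mk p = x := by
  obtain ⟨p, rfl⟩ := surj_mkQ x
  exact ⟨p, p.2, mk_of p.2⟩

lemma mk_eq {p q : ℝ × ℝ} (hp : p ∈ Q) (hq : q ∈ Q) :
    mk p = mk q ↔ rel ⟨p, hp.1⟩ ⟨q, hq.1⟩ := by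
  rw [mk_of hp, mk_of hq, mkQ, mkQ, Subtype.mk.injEq, qm_eq]

lemma mk_inj {p q : ℝ × ℝ} (hp : p ∈ Q) (hq : q ∈ Q) (h : mk p = mk q) (hN : NN p < 1/2) :
    p = q := by
  rw [mk_eq hp hq] at h
  have := (le_max_left |p.1 - 1/2| |p.2|).trans_lt hN
  rw [abs_lt] at this
  rcases h with h | ⟨h1, h2, h3⟩ | ⟨h1, h2, h3⟩
  · exact h
  · simp only at h1; linarith
  · simp only at h1; linarith

lemma mem_C2_mk {p : ℝ × ℝ} (hp : p ∈ Q) : mk p ∈ C2 ↔ NN p = 1/4 := by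
  rw [mk_of hp]
  constructor
  · rintro ⟨q, h, hq⟩
    rw [mem_Scirc] at hq
    have := NN_rel (qm_eq.mp h)
    simp only at this
    linarith
  · intro h
    exact ⟨⟨p, hp.1⟩, rfl, mem_Scirc.mpr h⟩

lemma mem_C1_mk {p : ℝ × ℝ} (hp : p ∈ Q) : mk p ∈ C1 ↔ (p.2 = 1 ∨ p.2 = -1) := by
  rw [mk_of hp]
  constructor
  · rintro ⟨q, h, hq⟩
    rcases qm_eq.mp h with h | ⟨h1, h2, h3⟩ | ⟨h1, h2, h3⟩
    · simp only at h; rw [← h]; exact hq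
    · simp only at h3; grind
    · simp only at h3; grind
  · intro h
    exact ⟨⟨p, hp.1⟩, rfl, h⟩

/-- Descending a homotopy to `X`. -/
lemma descend {Z : Type*} [TopologicalSpace Z] (h : ℝ × (ℝ × ℝ) → Z)
    (hc : ContinuousOn h (Icc 0 1 ×ˢ Q))
    (hcomp : ∀ s ∈ Icc (0:ℝ) 1, ∀ y ∈ Icc (-1 : ℝ) 1, h (s, (0, y)) = h (s, (1, -y))) :
    ∃ H : C(unitInterval × X, Z), ∀ (s : unitInterval) (p : ℝ × ℝ), p ∈ Q →
      H (s, mk p) = h (s, p) := by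
  let π : C(unitInterval × Q, unitInterval × X) := ⟨fun a => (a.1, mkQ a.2),
    continuous_fst.prodMk (continuous_mkQ.comp continuous_snd)⟩
  have hπs : Function.Surjective π := by
    rintro ⟨s, x⟩
    obtain ⟨p, rfl⟩ := surj_mkQ x
    exact ⟨(s, p), rfl⟩
  have hq : Topology.IsQuotientMap π := by
    exact Topology.IsQuotientMap.of_surjective_continuous hπs π.continuous
  let h' : C(unitInterval × Q, Z) := ⟨fun a => h (a.1, a.2), by
    refine hc.comp_continuous (by fun_prop) ?_
    rintro ⟨s, p⟩
    exact ⟨s.2, p.2⟩⟩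
  have hfac : Function.FactorsThrough h' π := by
    rintro ⟨s, p⟩ ⟨s', q⟩ hab
    simp only [π, ContinuousMap.coe_mk, Prod.mk.injEq] at hab
    obtain ⟨rfl, hab⟩ := hab
    have := hab
    rw [mkQ, mkQ, Subtype.mk.injEq, qm_eq] at this
    obtain ⟨⟨a, b⟩, hp⟩ := p
    obtain ⟨⟨c, d⟩, hq⟩ := q
    have hp' := (mem_Sq.mp hp.1).2
    have hq' := (mem_Sq.mp hq.1).2
    simp only [h', ContinuousMap.coe_mk]
    rcases this with h | ⟨h1, h2, h3⟩ | ⟨h1, h2, h3⟩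
    · simp only at h; rw [h]
    · simp only at h1 h2 h3
      subst h1 h2
      rw [hcomp s s.2 b hp', h3, neg_neg]
    · simp only at h1 h2 h3
      subst h1 h2
      rw [hcomp s s.2 d hq', h3, neg_neg]
  let H := hq.lift h' hfac
  refine ⟨H, fun s p hp => ?_⟩
  have := DFunLike.congr_fun (hq.lift_comp h' hfac) (s, ⟨p, hp⟩)
  rw [mk_of hp]
  exact this

lemma descend0 {Z : Type*} [TopologicalSpace Z] (h : ℝ × ℝ → Z)
    (hc : ContinuousOn h Q)
    (hcomp : ∀ y ∈ Icc (-1 : ℝ) 1, h (0, y) = h (1, -y)) :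
    ∃ H : C(X, Z), ∀ (p : ℝ × ℝ), p ∈ Q → H (mk p) = h p := by
  obtain ⟨H, hH⟩ := descend (fun a => h a.2) (hc.comp continuousOn_snd (fun a ha => ha.2))
    (fun s _ y hy => hcomp y hy)
  refine ⟨⟨fun x => H (0, x), by fun_prop⟩, fun p hp => ?_⟩
  exact hH 0 p hp

/-- gluing along a closed condition -/
lemma glue {α β : Type*} [TopologicalSpace α] [TopologicalSpace β] {S : Set α} {φ : α → ℝ}
    (hφ : Continuous φ) {f g : α → β} (hf : ContinuousOn f (S ∩ {x | φ x ≤ 0}))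
    (hg : ContinuousOn g (S ∩ {x | 0 ≤ φ x})) (h : ∀ x ∈ S, φ x = 0 → f x = g x) :
    ContinuousOn (fun x => if φ x ≤ 0 then f x else g x) S := by
  have h1 : IsClosed {x | φ x ≤ 0} := isClosed_le hφ continuous_const
  have h2 : IsClosed {x | 0 ≤ φ x} := isClosed_le continuous_const hφ
  intro x hx
  have hS : S = (S ∩ {x | φ x ≤ 0}) ∪ (S ∩ {x | 0 ≤ φ x}) := by
    ext y
    simp only [mem_union, mem_inter_iff, mem_ofPred_eq, ← and_or_left]
    exact ⟨fun hy => ⟨hy, le_total _ _⟩, fun hy => hy.1⟩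
  rw [hS]
  apply ContinuousWithinAt.union
  · by_cases hx0 : φ x ≤ 0
    · refine (hf x ⟨hx, hx0⟩).congr (fun y hy => if_pos hy.2) (if_pos hx0)
    · apply continuousWithinAt_of_notMem_closure
      intro hc
      exact hx0 (h1.closure_subset_iff.mpr inter_subset_right hc)
  · by_cases hx0 : 0 ≤ φ x
    · have key : ∀ y ∈ S ∩ {x | 0 ≤ φ x}, (if φ y ≤ 0 then f y else g y) = g y := by
        intro y hy
        split_ifs with h3
        · exact h y hy.1 (le_antisymm h3 hy.2)
        · rfl
      exact (hg x ⟨hx, hx0⟩).congr key (key x ⟨hx, hx0⟩)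
    · apply continuousWithinAt_of_notMem_closure
      intro hc
      exact hx0 (h2.closure_subset_iff.mpr inter_subset_right hc)


/-- clamp to `[0,1]` -/
def cl (x : ℝ) : ℝ := max 0 (min 1 x)

lemma continuous_cl : Continuous cl := by unfold cl; fun_prop
@[fun_prop] lemma continuous_cl' {α : Type*} [TopologicalSpace α] {f : α → ℝ} (hf : Continuous f) :
    Continuous fun x => cl (f x) := continuous_cl.comp hf
lemma cl_nonneg (x : ℝ) : 0 ≤ cl x := le_max_left _ _
lemma cl_le_one (x : ℝ) : cl x ≤ 1 := by simp [cl]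
lemma cl_zero {x : ℝ} (h : x ≤ 0) : cl x = 0 := by
  unfold cl; rw [min_eq_right (by linarith), max_eq_left h]
lemma cl_one {x : ℝ} (h : 1 ≤ x) : cl x = 1 := by
  unfold cl; rw [min_eq_left h]; norm_num
lemma cl_self {x : ℝ} (h : 0 ≤ x) (h1 : x ≤ 1) : cl x = x := by
  unfold cl; rw [min_eq_right h1, max_eq_right h]

lemma NN_nonneg (p : ℝ × ℝ) : 0 ≤ NN p := (abs_nonneg _).trans (le_max_left _ _)
lemma abs1_le (p : ℝ × ℝ) : |p.1 - 1/2| ≤ NN p := le_max_left _ _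
lemma abs2_le (p : ℝ × ℝ) : |p.2| ≤ NN p := le_max_right _ _

lemma mem_Sq_of_NN {p : ℝ × ℝ} (h : NN p ≤ 1/2) : p ∈ Sq := by
  have h1 := abs_le.mp ((abs1_le p).trans h)
  have h2 := abs_le.mp ((abs2_le p).trans h)
  rw [mem_Sq]
  refine ⟨⟨?_, ?_⟩, ?_, ?_⟩ <;> linarith [h1.1, h1.2, h2.1, h2.2]

/-- rescaling about the centre of the hole -/
def rs (k : ℝ) (p : ℝ × ℝ) : ℝ × ℝ := (1/2 + (p.1 - 1/2) * k, p.2 * k)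

lemma NN_rs {k : ℝ} (hk : 0 ≤ k) (p : ℝ × ℝ) : NN (rs k p) = NN p * k := by
  simp only [NN, rs, add_sub_cancel_left, abs_mul, abs_of_nonneg hk]
  rw [max_mul_of_nonneg _ _ hk]

lemma rs_one (p : ℝ × ℝ) : rs 1 p = p := by simp [rs]

lemma NN_edge0 (y : ℝ) : 1/2 ≤ NN (0, y) := by
  refine le_trans ?_ (abs1_le _)
  norm_num [abs_of_pos]
lemma NN_edge1 (y : ℝ) : 1/2 ≤ NN (1, y) := by
  refine le_trans ?_ (abs1_le _)
  norm_num [abs_of_pos]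
lemma NN_edge (y : ℝ) : NN (0, y) = NN (1, -y) := by
  simp only [NN, abs_neg]; norm_num

lemma mem_Q0 {y : ℝ} (hy : y ∈ Icc (-1 : ℝ) 1) : ((0, y) : ℝ × ℝ) ∈ Q :=
  ⟨mem_Sq.mpr ⟨by norm_num, hy⟩, by linarith [NN_edge0 y]⟩
lemma mem_Q1 {y : ℝ} (hy : y ∈ Icc (-1 : ℝ) 1) : ((1, y) : ℝ × ℝ) ∈ Q :=
  ⟨mem_Sq.mpr ⟨by norm_num, hy⟩, by linarith [NN_edge1 y]⟩
lemma neg_mem_I {y : ℝ} (hy : y ∈ Icc (-1 : ℝ) 1) : -y ∈ Icc (-1 : ℝ) 1 :=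
  ⟨by linarith [hy.2], by linarith [hy.1]⟩
lemma mk_edge {y : ℝ} (hy : y ∈ Icc (-1 : ℝ) 1) : mk (0, y) = mk (1, -y) := by
  rw [mk_eq (mem_Q0 hy) (mem_Q1 (neg_mem_I hy))]
  exact Or.inr (Or.inl ⟨rfl, rfl, by simp⟩)

lemma exists_NX : ∃ N : C(X, ℝ), ∀ p ∈ Q, N (mk p) = NN p :=
  descend0 NN continuous_NN.continuousOn (fun y _ => NN_edge y)

def NX : C(X, ℝ) := exists_NX.choose
lemma NX_mk {p : ℝ × ℝ} (hp : p ∈ Q) : NX (mk p) = NN p := exists_NX.choose_spec p hp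

lemma exists_absY : ∃ N : C(X, ℝ), ∀ p ∈ Q, N (mk p) = |p.2| :=
  descend0 (fun p => |p.2|) (by fun_prop) (fun y _ => by simp)

def absY : C(X, ℝ) := exists_absY.choose
lemma absY_mk {p : ℝ × ℝ} (hp : p ∈ Q) : absY (mk p) = |p.2| := exists_absY.choose_spec p hp

lemma mem_C2 {x : X} : x ∈ C2 ↔ NX x = 1/4 := by
  obtain ⟨p, hp, rfl⟩ := exists_mk x
  rw [mem_C2_mk hp, NX_mk hp]
lemma mem_C1 {x : X} : x ∈ C1 ↔ absY x = 1 := by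
  obtain ⟨p, hp, rfl⟩ := exists_mk x
  rw [mem_C1_mk hp, absY_mk hp, abs_eq one_pos.le]
lemma absY_le_NX (x : X) : absY x ≤ NX x := by
  obtain ⟨p, hp, rfl⟩ := exists_mk x
  rw [absY_mk hp, NX_mk hp]; exact abs2_le p

/-! The vertical push off the outer boundary. -/

def lam (s : ℝ) (p : ℝ × ℝ) : ℝ × ℝ :=
  (p.1, (1 - s) * p.2 + s * max (-(2/5)) (min (2/5) p.2))

lemma lam_mem {s : ℝ} (hs : s ∈ Icc (0:ℝ) 1) {p : ℝ × ℝ} (hp : p ∈ Q) : lam s p ∈ Q := by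
  obtain ⟨a, b⟩ := p
  obtain ⟨h1, h2⟩ := hp
  obtain ⟨hs0, hs1⟩ := hs
  rw [mem_Sq] at h1
  obtain ⟨ha, hb, hb'⟩ := h1
  simp only at ha hb hb'
  have c1 : -1 ≤ max (-(2/5)) (min (2/5) b) := le_max_of_le_left (by norm_num)
  have c2 : max (-(2/5)) (min (2/5) b) ≤ 1 := max_le (by norm_num) ((min_le_left _ _).trans (by norm_num))
  refine ⟨mem_Sq.mpr ⟨ha, ?_, ?_⟩, ?_⟩
  · simp only [lam]; nlinarith
  · simp only [lam]; nlinarith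
  · simp only [NN, lam, le_max_iff] at h2 ⊢
    rcases h2 with h2 | h2
    · exact Or.inl h2
    · right
      rw [le_abs] at h2 ⊢
      rcases h2 with h2 | h2
      · left
        have : 1/4 ≤ max (-(2/5)) (min (2/5) b) := le_max_of_le_right (le_min (by norm_num) h2)
        nlinarith
      · right
        have : max (-(2/5)) (min (2/5) b) ≤ -(1/4) :=
          max_le (by norm_num) ((min_le_right _ _).trans (by linarith))
        nlinarith

lemma exists_Lam : ∃ H : C(unitInterval × X, X), ∀ (s : unitInterval) (p : ℝ × ℝ), p ∈ Q →
      H (s, mk p) = mk (lam s p) := by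
  refine descend (fun a => mk (lam a.1 a.2)) ?_ ?_
  · refine continuousOn_mk.comp (Continuous.continuousOn (by unfold lam; fun_prop)) ?_
    rintro ⟨s, p⟩ ⟨hs, hp⟩
    exact lam_mem hs hp
  · intro s hs y hy
    have e : lam s (1, -y) = (1, -(lam s (0, y)).2) := by
      simp only [lam, Prod.mk.injEq, true_and]
      have : max (-(2/5)) (min (2/5) (-y)) = - max (-(2/5)) (min (2/5) y) := by
        rw [← min_neg_neg, neg_neg, ← max_neg_neg]
        rw [max_comm, min_comm]
        rcases le_total (2/5) y with h | h
        · grind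
        · grind
      rw [this]; ring
    simp only []
    rw [e]
    have := (mem_Sq.mp (lam_mem hs (mem_Q0 hy)).1).2
    exact mk_edge this

def Lam : C(unitInterval × X, X) := exists_Lam.choose
lemma Lam_mk (s : unitInterval) {p : ℝ × ℝ} (hp : p ∈ Q) : Lam (s, mk p) = mk (lam s p) :=
  exists_Lam.choose_spec s p hp

lemma Lam_zero (x : X) : Lam (0, x) = x := by
  obtain ⟨p, hp, rfl⟩ := exists_mk x
  rw [Lam_mk 0 hp]; simp [lam]

lemma Lam_C2 (s : unitInterval) {x : X} (hx : x ∈ C2) : Lam (s, x) = x := by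
  obtain ⟨p, hp, rfl⟩ := exists_mk x
  rw [Lam_mk s hp]
  rw [mem_C2_mk hp] at hx
  have h := abs_le.mp ((abs2_le p).trans hx.le)
  have : max (-(2/5)) (min (2/5) p.2) = p.2 := by
    rw [min_eq_right (by linarith [h.2]), max_eq_right (by linarith [h.1])]
  simp only [lam, this]
  congr 1
  ext
  · rfl
  · simp only; ring

lemma absY_Lam (x : X) : absY (Lam (1, x)) ≤ 2/5 := by
  obtain ⟨p, hp, rfl⟩ := exists_mk x
  rw [Lam_mk 1 hp, absY_mk (lam_mem (by simp) hp)]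
  simp only [lam, abs_le]
  constructor
  · simp
  · simp; norm_num

/-! The radial push off the inner boundary. -/

def piK (s : ℝ) (p : ℝ × ℝ) : ℝ := 1 + s / 2 * cl (2 - 4 * NN p)
def pi0 (s : ℝ) (p : ℝ × ℝ) : ℝ × ℝ := rs (piK s p) p

lemma piK_one_le {s : ℝ} (hs : s ∈ Icc (0:ℝ) 1) (p : ℝ × ℝ) : 1 ≤ piK s p := by
  have := mul_nonneg (half_pos one_pos).le (mul_nonneg hs.1 (cl_nonneg (2 - 4 * NN p)))
  unfold piK; linarith

lemma pi0_far (s : ℝ) {p : ℝ × ℝ} (h : 1/2 ≤ NN p) : pi0 s p = p := by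
  rw [pi0, piK, cl_zero (by linarith), mul_zero, add_zero, rs_one]

lemma pi0_mem {s : ℝ} (hs : s ∈ Icc (0:ℝ) 1) {p : ℝ × ℝ} (hp : p ∈ Q) : pi0 s p ∈ Q := by
  by_cases h : 1/2 ≤ NN p
  · rwa [pi0_far s h]
  · have hk := piK_one_le hs p
    have hN := NN_rs (zero_le_one.trans hk) p
    have hp2 := hp.2
    refine ⟨mem_Sq_of_NN ?_, ?_⟩
    · rw [pi0, hN, piK, cl_self (by linarith) (by linarith)]
      push Not at h
      nlinarith [hs.1, hs.2, mul_nonneg (sub_nonneg.2 hs.2) (mul_nonneg (NN_nonneg p) (by linarith : 0 ≤ 2 - 4 * NN p)), sq_nonneg (NN p - 1/2)]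
    · rw [pi0, hN]; nlinarith

lemma exists_Pi : ∃ H : C(unitInterval × X, X), ∀ (s : unitInterval) (p : ℝ × ℝ), p ∈ Q →
      H (s, mk p) = mk (pi0 s p) := by
  refine descend (fun a => mk (pi0 a.1 a.2)) ?_ ?_
  · refine continuousOn_mk.comp (Continuous.continuousOn ?_) ?_
    · unfold pi0 rs piK
      have := continuous_NN
      fun_prop
    rintro ⟨s, p⟩ ⟨hs, hp⟩
    exact pi0_mem hs hp
  · intro s hs y hy
    simp only []
    rw [pi0_far s (NN_edge0 y), pi0_far s (NN_edge1 _)]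
    exact mk_edge hy

def Pi : C(unitInterval × X, X) := exists_Pi.choose
lemma Pi_mk (s : unitInterval) {p : ℝ × ℝ} (hp : p ∈ Q) : Pi (s, mk p) = mk (pi0 s p) :=
  exists_Pi.choose_spec s p hp

lemma Pi_zero (x : X) : Pi (0, x) = x := by
  obtain ⟨p, hp, rfl⟩ := exists_mk x
  rw [Pi_mk 0 hp]; simp [pi0, piK, rs]

lemma Pi_C1 (s : unitInterval) {x : X} (hx : x ∈ C1) : Pi (s, x) = x := by
  have h1 := absY_le_NX x
  rw [mem_C1.mp hx] at h1
  obtain ⟨p, hp, rfl⟩ := exists_mk x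
  rw [NX_mk hp] at h1
  rw [Pi_mk s hp, pi0_far s (by linarith)]

lemma NX_Pi (x : X) : 3/8 ≤ NX (Pi (1, x)) := by
  obtain ⟨p, hp, rfl⟩ := exists_mk x
  rw [Pi_mk 1 hp, NX_mk (pi0_mem (by simp) hp)]
  by_cases h : 1/2 ≤ NN p
  · rw [pi0_far _ h]; linarith
  · have hk := piK_one_le (s := 1) (by simp) p
    have hN := NN_rs (zero_le_one.trans hk) p
    have hp2 := hp.2
    rw [show (((1 : unitInterval) : ℝ)) = 1 from rfl]
    rw [pi0, hN, piK, cl_self (by linarith) (by linarith)]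
    push Not at h
    nlinarith

lemma Pi_C2 (s : unitInterval) {p : ℝ × ℝ} (hp : p ∈ Q) (h : NN p = 1/4) :
    Pi (s, mk p) = mk (rs (1 + s / 2) p) := by
  rw [Pi_mk s hp, pi0, piK, h, cl_one (by norm_num), mul_one]


/-! The circle valued function. -/

/-- clamp to `[-1/4, 1/4]` -/
def cq (y : ℝ) : ℝ := max (-(1/4)) (min (1/4) y)

def sig (p : ℝ × ℝ) : ℝ :=
  1/2 - 2 * cq p.2 * (1 - 2 * |p.1 - 1/2|) + 1/2 * cl (4 * |p.1 - 1/2| - 1)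

lemma continuous_sig : Continuous sig := by unfold sig cq; fun_prop

lemma cq_le (y : ℝ) : cq y ≤ 1/4 := max_le (by norm_num) (min_le_left _ _)
lemma le_cq (y : ℝ) : -(1/4) ≤ cq y := le_max_left _ _
lemma cq_top {y : ℝ} (h : 1/4 ≤ y) : cq y = 1/4 := by
  rw [cq, min_eq_left h]; norm_num
lemma cq_bot {y : ℝ} (h : y ≤ -(1/4)) : cq y = -(1/4) := by
  rw [cq, max_eq_left ((min_le_right _ _).trans h)]
lemma cq_self {y : ℝ} (h : -(1/4) ≤ y) (h' : y ≤ 1/4) : cq y = y := by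
  rw [cq, min_eq_right h', max_eq_right h]

lemma abs1_half {p : ℝ × ℝ} (hp : p ∈ Sq) : |p.1 - 1/2| ≤ 1/2 := by
  have := (mem_Sq.mp hp).1
  rw [abs_le]; constructor <;> linarith

lemma sig_ge {p : ℝ × ℝ} (hp : p ∈ Sq) : |p.1 - 1/2| ≤ sig p := by
  have h := abs1_half hp
  have h1 := cq_le p.2
  have h2 := cl_nonneg (4 * |p.1 - 1/2| - 1)
  unfold sig
  nlinarith

lemma sig_le {p : ℝ × ℝ} (hp : p ∈ Sq) : sig p ≤ 1 := by
  have h := abs1_half hp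
  have h0 := abs_nonneg (p.1 - 1/2)
  have h1 := le_cq p.2
  have h2 : cl (4 * |p.1 - 1/2| - 1) ≤ 2 * |p.1 - 1/2| :=
    max_le (by linarith) ((min_le_right _ _).trans (by linarith))
  unfold sig
  nlinarith

lemma sig_nonneg {p : ℝ × ℝ} (hp : p ∈ Sq) : 0 ≤ sig p := (abs_nonneg _).trans (sig_ge hp)

def u0 (p : ℝ × ℝ) : Circle :=
  if 1/2 - p.1 ≤ 0 then Circle.exp (Real.pi * sig p) else Circle.exp (-(Real.pi * sig p))

lemma exp_pi_eq : Circle.exp Real.pi = Circle.exp (-Real.pi) := by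
  rw [Circle.exp_eq_exp]
  exact ⟨1, by push_cast; ring⟩

lemma u0_edge (y : ℝ) : u0 (0, y) = u0 (1, -y) := by
  have h1 : sig (0, y) = 1 := by
    simp only [sig]; norm_num [abs_of_pos]; rw [cl_one (by norm_num)]; norm_num
  have h2 : sig (1, -y) = 1 := by
    simp only [sig]; norm_num [abs_of_pos]; rw [cl_one (by norm_num)]; norm_num
  simp only [u0]
  rw [if_neg (by norm_num), if_pos (by norm_num), h1, h2, mul_one, exp_pi_eq]

lemma sig_mid {p : ℝ × ℝ} (h : p.1 = 1/2) : sig p = 1/2 - 2 * cq p.2 := by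
  simp only [sig, h]; norm_num; rw [cl_zero (by norm_num)]

lemma continuousOn_u0 : ContinuousOn u0 Q := by
  unfold u0
  have := continuous_sig
  refine glue (φ := fun p : ℝ × ℝ => 1/2 - p.1) (by fun_prop) ?_ ?_ ?_
  · exact Continuous.continuousOn (by fun_prop)
  · exact Continuous.continuousOn (by fun_prop)
  · intro p hp hp0
    have h1 : p.1 = 1/2 := by linarith
    have h2 := hp.2
    simp only [NN, h1, sub_self, abs_zero, le_max_iff] at h2
    rw [sig_mid h1]
    rcases h2 with h2 | h2
    · norm_num at h2
    rcases le_abs.mp h2 with h2 | h2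
    · rw [cq_top h2]; norm_num
    · rw [cq_bot (by linarith), show (1/2 - 2 * (-(1/4)) : ℝ) = 1 by norm_num, mul_one]
      exact exp_pi_eq

lemma exists_u : ∃ u : C(X, Circle), ∀ p ∈ Q, u (mk p) = u0 p :=
  descend0 u0 continuousOn_u0 (fun y _ => u0_edge y)

def uX : C(X, Circle) := exists_u.choose
lemma uX_mk {p : ℝ × ℝ} (hp : p ∈ Q) : uX (mk p) = u0 p := exists_u.choose_spec p hp

/-- `u0` as an exponential -/
lemma u0_spec {p : ℝ × ℝ} (hp : p ∈ Sq) : ∃ s : ℝ, u0 p = Circle.exp (Real.pi * s) ∧ |s| = sig p ∧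
    (0 < p.1 - 1/2 → 0 < s) ∧ (p.1 - 1/2 < 0 → s < 0) := by
  have h := sig_ge hp
  unfold u0
  split_ifs with h1
  · refine ⟨sig p, rfl, abs_of_nonneg (sig_nonneg hp), fun h2 => ?_, fun h2 => by linarith⟩
    rw [abs_of_pos h2] at h; linarith
  · refine ⟨-sig p, by rw [mul_neg], by rw [abs_neg]; exact abs_of_nonneg (sig_nonneg hp),
      fun h2 => by linarith, fun h2 => ?_⟩
    rw [abs_of_neg h2] at h; linarith

lemma exp_pi_inj {s t : ℝ} (h : Circle.exp (Real.pi * s) = Circle.exp (Real.pi * t))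
    (hs : |s| ≤ 1) (ht : |t| ≤ 1) : s = t ∨ (s = 1 ∧ t = -1) ∨ (s = -1 ∧ t = 1) := by
  rw [Circle.exp_eq_exp] at h
  obtain ⟨m, hm⟩ := h
  have h1 : s = t + 2 * m := by
    apply mul_left_cancel₀ Real.pi_ne_zero
    rw [hm]; ring
  rw [abs_le] at hs ht
  have m1 : (m : ℝ) ≤ 1 := by linarith [hs.2, ht.1]
  have m2 : (-1 : ℝ) ≤ m := by linarith [hs.1, ht.2]
  have m1' : m ≤ 1 := by exact_mod_cast m1
  have m2' : -1 ≤ m := by exact_mod_cast m2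
  obtain rfl | rfl | rfl : m = -1 ∨ m = 0 ∨ m = 1 := by omega
  · right; right; push_cast at h1; constructor <;> linarith [hs.1, ht.2]
  · left; push_cast at h1; linarith
  · right; left; push_cast at h1; constructor <;> linarith [hs.2, ht.1]

lemma u0_eq_one {p : ℝ × ℝ} (hp : p ∈ Q) (h : u0 p = 1) : p.1 = 1/2 ∧ 1/4 ≤ p.2 := by
  obtain ⟨s, hs, hs1, -, -⟩ := u0_spec hp.1
  rw [hs, ← Circle.exp_zero, ← mul_zero Real.pi] at h
  have h1 : s = 0 := by
    rcases exp_pi_inj h (by rw [hs1]; exact sig_le hp.1) (by simp) with h | h | h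
    · exact h
    · norm_num at h
    · norm_num at h
  rw [h1, abs_zero] at hs1
  have h2 := sig_ge hp.1
  have h3 : |p.1 - 1/2| = 0 := le_antisymm (by linarith) (abs_nonneg _)
  have h4 : p.1 = 1/2 := by linarith [abs_eq_zero.mp h3]
  refine ⟨h4, ?_⟩
  rw [sig_mid h4] at hs1
  by_contra h5
  have := hp.2
  simp only [NN, h4, sub_self, abs_zero, le_max_iff] at this
  rcases this with h6 | h6
  · norm_num at h6
  rcases le_abs.mp h6 with h6 | h6
  · exact h5 h6
  · rw [cq_bot (by linarith)] at hs1; norm_num at hs1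

/-- The slit from the inner to the outer boundary. -/
def jj (r : ℝ) : X := mk (1/2, 1/4 + 3/4 * cl r)

lemma NN_jj (r : ℝ) : NN (1/2, 1/4 + 3/4 * cl r) = 1/4 + 3/4 * cl r := by
  have := cl_nonneg r
  simp only [NN, sub_self, abs_zero]
  rw [abs_of_nonneg (by positivity), max_eq_right (by positivity)]

lemma jj_mem (r : ℝ) : ((1/2, 1/4 + 3/4 * cl r) : ℝ × ℝ) ∈ Q := by
  have h0 := cl_nonneg r
  have h1 := cl_le_one r
  refine ⟨mem_Sq.mpr ⟨by norm_num, ?_, ?_⟩, ?_⟩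
  · simp only; linarith
  · simp only; linarith
  · rw [NN_jj]; linarith

lemma continuous_jj : Continuous jj :=
  continuousOn_mk.comp_continuous (by fun_prop) jj_mem

lemma jj_zero {r : ℝ} (h : r ≤ 0) : jj r ∈ C2 := by
  rw [jj, mem_C2_mk (jj_mem r), NN_jj, cl_zero h]; norm_num

lemma jj_of_u {x : X} (h : uX x = 1) : jj ((4 * absY x - 1) / 3) = x := by
  obtain ⟨p, hp, rfl⟩ := exists_mk x
  rw [uX_mk hp] at h
  obtain ⟨h1, h2⟩ := u0_eq_one hp h
  have h3 := (mem_Sq.mp hp.1).2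
  rw [absY_mk hp, abs_of_nonneg (by linarith), jj, cl_self (by linarith) (by linarith)]
  congr 1
  ext
  · exact h1.symm
  · simp only; ring

lemma sig_C2 {p : ℝ × ℝ} (h : NN p = 1/4) : sig p = 1/2 - 2 * p.2 * (1 - 2 * |p.1 - 1/2|) := by
  have h1 := abs_le.mp ((abs2_le p).trans h.le)
  have h2 := (abs1_le p).trans h.le
  rw [sig, cq_self (by linarith) (by linarith), cl_zero (by linarith)]; ring

lemma C2_cases {p : ℝ × ℝ} (h : NN p = 1/4) :
    (p.2 = 1/4 ∧ sig p = |p.1 - 1/2|) ∨ (|p.1 - 1/2| = 1/4 ∧ sig p = 1/2 - p.2) ∨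
    (p.2 = -(1/4) ∧ sig p = 1 - |p.1 - 1/2|) := by
  rw [sig_C2 h]
  rcases max_choice |p.1 - 1/2| |p.2| with h1 | h1
  · have h2 : |p.1 - 1/2| = 1/4 := by rw [← h1]; exact h
    right; left
    refine ⟨h2, ?_⟩
    rw [h2]; ring
  · have h2 : |p.2| = 1/4 := by rw [← h1]; exact h
    rcases (abs_eq (by norm_num)).mp h2 with h3 | h3
    · left; refine ⟨h3, ?_⟩; rw [h3]; ring
    · right; right; refine ⟨h3, ?_⟩; rw [h3]; ring

lemma C2_sig_inj {p q : ℝ × ℝ} (hp : NN p = 1/4) (hq : NN q = 1/4) (h : sig p = sig q) :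
    |p.1 - 1/2| = |q.1 - 1/2| ∧ p.2 = q.2 := by
  have h1 := abs_le.mp ((abs2_le p).trans hp.le)
  have h2 := (abs1_le p).trans hp.le
  have h3 := abs_le.mp ((abs2_le q).trans hq.le)
  have h4 := (abs1_le q).trans hq.le
  rcases C2_cases hp with ⟨a, b⟩ | ⟨a, b⟩ | ⟨a, b⟩ <;>
  rcases C2_cases hq with ⟨c, d⟩ | ⟨c, d⟩ | ⟨c, d⟩ <;>
  constructor <;> linarith

lemma u0_inj_C2 {p q : ℝ × ℝ} (hp : NN p = 1/4) (hq : NN q = 1/4) (h : u0 p = u0 q) : p = q := by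
  have hpS : p ∈ Sq := mem_Sq_of_NN (by linarith)
  have hqS : q ∈ Sq := mem_Sq_of_NN (by linarith)
  obtain ⟨s, hs, hs1, hs2, hs3⟩ := u0_spec hpS
  obtain ⟨t, ht, ht1, ht2, ht3⟩ := u0_spec hqS
  rw [hs, ht] at h
  have h3 := exp_pi_inj h (hs1 ▸ sig_le hpS) (ht1 ▸ sig_le hqS)
  have key : sig p = sig q := by
    rw [← hs1, ← ht1]
    rcases h3 with h | ⟨h, h'⟩ | ⟨h, h'⟩
    · rw [h]
    · rw [h, h']; norm_num
    · rw [h, h']; norm_num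
  obtain ⟨e1, e2⟩ := C2_sig_inj hp hq key
  have zero : ∀ r : ℝ × ℝ, NN r = 1/4 → sig r = 1 → |r.1 - 1/2| = 0 := by
    intro r hr hr1
    have h1 := abs_le.mp ((abs2_le r).trans hr.le)
    have h2 := (abs1_le r).trans hr.le
    rcases C2_cases hr with ⟨a, b⟩ | ⟨a, b⟩ | ⟨a, b⟩ <;> linarith
  refine Prod.ext ?_ e2
  rcases abs_eq_abs.mp e1 with e3 | e3
  · linarith
  by_cases e4 : p.1 - 1/2 = 0
  · linarith
  · exfalso
    rcases h3 with h | ⟨h, h'⟩ | ⟨h, h'⟩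
    · rcases lt_or_gt_of_ne e4 with e5 | e5
      · have := hs3 e5; have := ht2 (by linarith); linarith
      · have := hs2 e5; have := ht3 (by linarith); linarith
    · rw [h] at hs1
      exact e4 (abs_eq_zero.mp (zero p hp (by rw [← hs1]; norm_num)))
    · rw [h] at hs1
      exact e4 (abs_eq_zero.mp (zero p hp (by rw [← hs1]; norm_num)))

lemma u0_surj_C2 (z : Circle) : ∃ p : ℝ × ℝ, NN p = 1/4 ∧ u0 p = z := by
  have hpi := Real.pi_pos
  set s : ℝ := Complex.arg z / Real.pi with hs
  have hsz : Circle.exp (Real.pi * s) = z := by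
    rw [hs, mul_div_cancel₀ _ hpi.ne', Circle.exp_arg]
  have hs1 : |s| ≤ 1 := by
    rw [hs, abs_div, abs_of_pos hpi, div_le_one hpi]; exact Complex.abs_arg_le_pi _
  have hs0 := abs_nonneg s
  -- the point of `C2` with parameter `|s|`
  have key : ∀ σ : ℝ, 0 ≤ σ → σ ≤ 1 → ∀ ε : ℝ, |ε| = 1 →
      let p : ℝ × ℝ := (1/2 + ε * min (1/4) (min σ (1 - σ)), cq (1/2 - σ))
      NN p = 1/4 ∧ sig p = σ := by
    intro σ h0 h1 ε hε p
    have hm : 0 ≤ min (1/4 : ℝ) (min σ (1 - σ)) :=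
      le_min (by norm_num) (le_min h0 (by linarith))
    have ha : |p.1 - 1/2| = min (1/4) (min σ (1 - σ)) := by
      simp only [p, add_sub_cancel_left, abs_mul, hε, one_mul, abs_of_nonneg hm]
    have hN : NN p = 1/4 := by
      rw [NN, ha]
      have hq := cq_le (1/2 - σ)
      have hq' := le_cq (1/2 - σ)
      have : |p.2| ≤ 1/4 := abs_le.mpr ⟨by simpa [p] using hq', by simpa [p] using hq⟩
      rcases le_total σ (1/4) with h2 | h2
      · have : p.2 = 1/4 := cq_top (by linarith)
        rw [this, abs_of_pos (by norm_num), max_eq_right (min_le_left _ _)]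
      · rcases le_total σ (3/4) with h3 | h3
        · rw [min_eq_left (le_min h2 (by linarith)), max_eq_left this]
        · have : p.2 = -(1/4) := cq_bot (by linarith)
          rw [this, abs_neg, abs_of_pos (by norm_num), max_eq_right (min_le_left _ _)]
    refine ⟨hN, ?_⟩
    rw [sig_C2 hN, ha]
    rcases le_total σ (1/4) with h2 | h2
    · have : p.2 = 1/4 := cq_top (by linarith)
      rw [this, min_eq_left (show σ ≤ 1 - σ by linarith), min_eq_right h2]; ring
    · rcases le_total σ (3/4) with h3 | h3
      · have : p.2 = 1/2 - σ := cq_self (by linarith) (by linarith)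
        rw [this, min_eq_left (le_min h2 (by linarith))]; ring
      · have : p.2 = -(1/4) := cq_bot (by linarith)
        rw [this, min_eq_right (show 1 - σ ≤ σ by linarith), min_eq_right (by linarith)]; ring
  have hm : 0 ≤ min (1/4 : ℝ) (min |s| (1 - |s|)) :=
      le_min (by norm_num) (le_min hs0 (by linarith))
  rcases le_total 0 s with h | h
  · obtain ⟨k1, k2⟩ := key |s| hs0 hs1 1 (by simp)
    refine ⟨_, k1, ?_⟩
    rw [u0, if_pos (by simp only; linarith), k2, abs_of_nonneg h, hsz]
  · obtain ⟨k1, k2⟩ := key |s| hs0 hs1 (-1) (by simp)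
    refine ⟨_, k1, ?_⟩
    rw [u0, k2, abs_of_nonpos h]
    split_ifs with h4
    · have h5 : min (1/4 : ℝ) (min |s| (1 - |s|)) = 0 := by
        rw [abs_of_nonpos h] at hm ⊢
        simp only at h4
        linarith
      have h6 : |s| = 0 ∨ |s| = 1 := by
        rcases min_choice (1/4 : ℝ) (min |s| (1 - |s|)) with h7 | h7
        · rw [h5] at h7; norm_num at h7
        · rw [h5] at h7
          rcases min_choice |s| (1 - |s|) with h8 | h8
          · left; rw [← h8]; exact h7.symm
          · right; rw [h8] at h7; linarith
      rw [← hsz]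
      rw [abs_of_nonpos h] at h6
      rcases h6 with h6 | h6
      · have : s = 0 := by linarith
        simp [this]
      · have : s = -1 := by linarith
        rw [this, neg_neg, mul_one, mul_neg_one]; exact exp_pi_eq
    · rw [← hsz]; congr 1; ring

lemma isClosed_C2 : IsClosed C2 := by
  have : C2 = NX ⁻¹' {1/4} := by ext x; simp [mem_C2]
  rw [this]; exact isClosed_singleton.preimage NX.continuous

lemma isClosed_C1 : IsClosed C1 := by
  have : C1 = absY ⁻¹' {1} := by ext x; simp [mem_C1]
  rw [this]; exact isClosed_singleton.preimage absY.continuous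

instance : CompactSpace X := surj_mkQ.compactSpace continuous_mkQ

lemma exists_psi : ∃ ψ : C(Circle, C2), ∀ x : C2, ψ (uX x) = x := by
  have : CompactSpace C2 := isCompact_iff_compactSpace.mp isClosed_C2.isCompact
  let g : C2 → Circle := fun x => uX x
  have hg : Continuous g := by fun_prop
  have hb : Function.Bijective g := by
    constructor
    · rintro ⟨x, hx⟩ ⟨y, hy⟩ h
      obtain ⟨p, hp, rfl⟩ := exists_mk x
      obtain ⟨q, hq, rfl⟩ := exists_mk y
      rw [mem_C2_mk hp] at hx
      rw [mem_C2_mk hq] at hy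
      simp only [g, uX_mk hp, uX_mk hq] at h
      simp [u0_inj_C2 hx hy h]
    · intro z
      obtain ⟨p, hp, hz⟩ := u0_surj_C2 z
      have hpQ : p ∈ Q := ⟨mem_Sq_of_NN (by linarith), hp.ge⟩
      exact ⟨⟨mk p, (mem_C2_mk hpQ).mpr hp⟩, by simp only [g]; rw [uX_mk hpQ, hz]⟩
  let e : C2 ≃ Circle := Equiv.ofBijective g hb
  have he : Continuous e := hg
  refine ⟨⟨(he.homeoOfEquivCompactToT2).symm, by fun_prop⟩, fun x => ?_⟩
  exact e.symm_apply_apply x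


/-! Extension of the map over the hole. -/

def cI (x : ℝ) : unitInterval := ⟨cl x, cl_nonneg x, cl_le_one x⟩

@[fun_prop] lemma continuous_cI {α : Type*} [TopologicalSpace α] {f : α → ℝ} (hf : Continuous f) :
    Continuous (fun x => cI (f x)) := by
  unfold cI
  exact Continuous.subtype_mk (by fun_prop) _

lemma cI_zero {x : ℝ} (h : x ≤ 0) : cI x = 0 := Subtype.ext (cl_zero h)
lemma cI_one {x : ℝ} (h : 1 ≤ x) : cI x = 1 := Subtype.ext (cl_one h)

lemma not_C1_C2 {x : X} (h1 : x ∈ C1) (h2 : x ∈ C2) : False := by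
  rw [mem_C1] at h1
  rw [mem_C2] at h2
  have := absY_le_NX x
  rw [h1, h2] at this
  norm_num at this

lemma homotopy_stays {x : C2} (γ : C(unitInterval, Bd)) (h0 : (γ 0 : X) ∈ C1) (t : unitInterval) :
    (γ t : X) ∈ C1 := by
  have hc : IsClopen {t : unitInterval | (γ t : X) ∈ C1} := by
    constructor
    · exact isClosed_C1.preimage (by fun_prop : Continuous fun t => (γ t : X))
    · have : {t : unitInterval | (γ t : X) ∈ C1} = {t : unitInterval | (γ t : X) ∈ C2}ᶜ := by
        ext t
        constructor
        · intro h h'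
          exact not_C1_C2 h h'
        · intro h
          rcases (γ t).2 with h' | h'
          · exact h'
          · exact absurd h' h
      rw [this, isOpen_compl_iff]
      exact isClosed_C2.preimage (by fun_prop : Continuous fun t => (γ t : X))
  have := hc.eq_univ ⟨0, h0⟩
  have h : t ∈ {t : unitInterval | (γ t : X) ∈ C1} := by rw [this]; trivial
  exact h

lemma mem_Q_of {p : ℝ × ℝ} (h : NN p = 1/4) : p ∈ Q := ⟨mem_Sq_of_NN (by linarith), h.ge⟩

lemma NN_half : NN (3/4, 0) = 1/4 := by
  simp only [NN]; norm_num [abs_of_pos]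

def c2 (p : ℝ × ℝ) : C2 :=
  if h : NN p = 1/4 then ⟨mk p, (mem_C2_mk (mem_Q_of h)).mpr h⟩
  else ⟨mk (3/4, 0), (mem_C2_mk (mem_Q_of NN_half)).mpr NN_half⟩

lemma c2_of {p : ℝ × ℝ} (h : NN p = 1/4) : (c2 p : X) = mk p := by
  simp [c2, h]

lemma continuousOn_c2 : ContinuousOn c2 {p | NN p = 1/4} := by
  have h : ContinuousOn (fun p => (c2 p : X)) {p | NN p = 1/4} :=
    (continuousOn_mk.mono fun p hp => mem_Q_of hp).congr fun p hp => c2_of hp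
  rw [continuousOn_iff_continuous_restrict] at h ⊢
  exact continuous_induced_rng.mpr h

lemma exists_F (f : C(X, X)) (h21 : MapsTo f C2 C1)
    (h2 : Inessential (restrictMap f (h21.mono_right Set.subset_union_left : MapsTo f C2 Bd))) :
    ∃ F : ℝ × ℝ → X, ContinuousOn F Sq ∧ (∀ p ∈ Q, F p = f (mk p)) ∧
      (∀ p, NN p ≤ 1/4 → F p ∈ C1) := by
  obtain ⟨b, ⟨H⟩⟩ := h2
  have hH : ∀ t x, ((H (t, x) : Bd) : X) ∈ C1 := by
    intro t x
    refine homotopy_stays (x := x) (⟨fun t => H (t, x), by fun_prop⟩ : C(unitInterval, Bd)) ?_ t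
    simp only [ContinuousMap.coe_mk]
    rw [H.apply_zero]
    exact h21 x.2
  have hb : (b : X) ∈ C1 := by
    have := hH 1 (c2 (0, 0))
    rw [H.apply_one] at this
    exact this
  have cN := continuous_NN
  let k : ℝ × ℝ → ℝ := fun p => 1 / (4 * max (NN p) (1/8))
  have hk0 : ∀ p, 0 < max (NN p) (1/8) := fun p => lt_of_lt_of_le (by norm_num) (le_max_right _ _)
  have ck : Continuous k := by
    apply Continuous.div continuous_const (by fun_prop)
    intro p; have := hk0 p; positivity
  have hk : ∀ p, 1/8 ≤ NN p → NN (rs (k p) p) = 1/4 := by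
    intro p hp
    have := hk0 p
    rw [NN_rs (by simp only [k]; positivity)]
    simp only [k]
    rw [max_eq_left hp]
    field_simp
  let J : ℝ × ℝ → X := fun p => (H (cI (2 * (1 - 4 * NN p)), c2 (rs (k p) p)) : Bd)
  have cJ : ContinuousOn J {p | 1/8 ≤ NN p} := by
    have c1 : ContinuousOn (fun p => c2 (rs (k p) p)) {p | 1/8 ≤ NN p} := by
      refine continuousOn_c2.comp (Continuous.continuousOn ?_) fun p hp => hk p hp
      unfold rs; fun_prop
    have c3 : ContinuousOn (fun p => cI (2 * (1 - 4 * NN p))) {p | 1/8 ≤ NN p} :=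
      Continuous.continuousOn (by fun_prop)
    exact (continuous_subtype_val.comp H.continuous).comp_continuousOn (c3.prodMk c1)
  let G : ℝ × ℝ → X := fun p => if 1/8 - NN p ≤ 0 then J p else b
  have cG : ContinuousOn G univ := by
    refine glue (φ := fun p => 1/8 - NN p) (by fun_prop) ?_ continuousOn_const ?_
    · refine cJ.mono ?_
      rintro p ⟨-, hp⟩
      have hp : 1/8 - NN p ≤ 0 := hp
      show 1/8 ≤ NN p
      linarith
    · intro p _ hp
      have hp : 1/8 - NN p = 0 := hp
      simp only [J]
      rw [cI_one (by linarith), H.apply_one]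
      rfl
  refine ⟨fun p => if 1/4 - NN p ≤ 0 then f (mk p) else G p, ?_, ?_, ?_⟩
  · refine glue (φ := fun p => 1/4 - NN p) (by fun_prop) ?_ (cG.mono (subset_univ _)) ?_
    · refine f.continuous.comp_continuousOn (continuousOn_mk.mono ?_)
      rintro p ⟨hp, hp'⟩
      have hp' : 1/4 - NN p ≤ 0 := hp'
      exact ⟨hp, by linarith⟩
    · intro p hpS hp
      have hp : 1/4 - NN p = 0 := hp
      have hN : NN p = 1/4 := by linarith
      have : k p = 1 := by simp only [k, hN]; norm_num
      simp only [G, J]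
      rw [if_pos (by linarith), this, rs_one, cI_zero (by linarith), H.apply_zero]
      simp [restrictMap, c2_of hN]
  · intro p hp
    have := hp.2
    simp only
    rw [if_pos (by linarith)]
  · intro p hp
    simp only
    split_ifs with h1
    · have hN : NN p = 1/4 := by linarith
      exact h21 ((mem_C2_mk (mem_Q_of hN)).mpr hN)
    · simp only [G]
      split_ifs
      · exact hH _ _
      · exact hb

/-! Extension to the strip -/

def cy (y : ℝ) : ℝ := max (-1) (min 1 y)
@[fun_prop] lemma continuous_cy {α : Type*} [TopologicalSpace α] {f : α → ℝ} (hf : Continuous f) :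
    Continuous (fun x => cy (f x)) := by unfold cy; fun_prop
lemma cy_mem (y : ℝ) : cy y ∈ Icc (-1 : ℝ) 1 := ⟨le_max_left _ _, max_le (by norm_num) (min_le_left _ _)⟩
lemma cy_self {y : ℝ} (h : y ∈ Icc (-1 : ℝ) 1) : cy y = y := by
  rw [cy, min_eq_right h.2, max_eq_right h.1]
lemma cy_neg (y : ℝ) : cy (-y) = -cy y := by
  rcases le_total y (-1) with h | h
  · rw [cy, cy, min_eq_left (by linarith), min_eq_right (by linarith), max_eq_left h]; norm_num
  rcases le_total y 1 with h1 | h1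
  · rw [cy_self ⟨h, h1⟩, cy_self ⟨by linarith, by linarith⟩]
  · rw [cy, cy, min_eq_right (by linarith), min_eq_left h1, max_eq_left (by linarith)]; norm_num

lemma exists_strip {Z : Type*} [TopologicalSpace Z] (F : ℝ × ℝ → Z) (hF : ContinuousOn F Sq)
    (hE : ∀ y ∈ Icc (-1 : ℝ) 1, F (0, y) = F (1, -y)) :
    ∃ F' : C(ℝ × ℝ, Z), (∀ p ∈ Sq, F' p = F p) ∧ (∀ x y, F' (x + 1, -y) = F' (x, y)) ∧
      (∀ x y, |y| = 1 → ∃ p ∈ Sq, |p.2| = 1 ∧ F' (x, y) = F p) := by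
  let G : ℝ → ℝ → Z := fun y z => if z - 1/2 ≤ 0 then F (2 * z, cy y) else F (2 * z - 1, -cy y)
  have hmem : ∀ x y : ℝ, 0 ≤ x → x ≤ 1 → y ∈ Icc (-1 : ℝ) 1 → (x, y) ∈ Sq :=
    fun x y h0 h1 hy => mem_Sq.mpr ⟨⟨h0, h1⟩, hy⟩
  have cG : ContinuousOn (Function.uncurry G) (univ ×ˢ Icc 0 1) := by
    have : Function.uncurry G = fun q : ℝ × ℝ =>
      if q.2 - 1/2 ≤ 0 then F (2 * q.2, cy q.1) else F (2 * q.2 - 1, -cy q.1) := by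
      ext ⟨a, b⟩; rfl
    rw [this]
    refine glue (φ := fun q : ℝ × ℝ => q.2 - 1/2) (by fun_prop) ?_ ?_ ?_
    · refine hF.comp (f := fun q : ℝ × ℝ => (2 * q.2, cy q.1)) (Continuous.continuousOn (by fun_prop)) ?_
      rintro ⟨y, z⟩ ⟨⟨-, h0, h1⟩, hz⟩
      have hz : z - 1/2 ≤ 0 := hz
      simp only at h0 h1
      exact hmem _ _ (by simp only; linarith) (by simp only; linarith) (cy_mem _)
    · refine hF.comp (f := fun q : ℝ × ℝ => (2 * q.2 - 1, -cy q.1)) (Continuous.continuousOn (by fun_prop)) ?_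
      rintro ⟨y, z⟩ ⟨⟨-, h0, h1⟩, hz⟩
      have hz : 0 ≤ z - 1/2 := hz
      simp only at h0 h1
      exact hmem _ _ (by simp only; linarith) (by simp only; linarith) (neg_mem_I (cy_mem _))
    · rintro ⟨y, z⟩ - hz
      have hz : z - 1/2 = 0 := hz
      have : z = 1/2 := by linarith
      subst this
      norm_num
      rw [hE _ (neg_mem_I (cy_mem _)), neg_neg]
  have cF : Continuous fun p : ℝ × ℝ => G p.2 (Int.fract (p.1 / 2)) := by
    have := ContinuousOn.comp_fract (s := fun p : ℝ × ℝ => p.1 / 2) (f := fun p => G p.2) ?_ (by fun_prop) ?_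
    · exact this
    · refine cG.comp (f := fun q : (ℝ × ℝ) × ℝ => (q.1.2, q.2)) (Continuous.continuousOn (by fun_prop)) ?_
      rintro ⟨y, z⟩ ⟨-, hz⟩
      exact ⟨trivial, hz⟩
    · intro p
      simp only [G]
      rw [if_pos (by norm_num), if_neg (by norm_num)]
      norm_num
      exact hE _ (cy_mem _)
  refine ⟨⟨_, cF⟩, ?_, ?_, ?_⟩
  · rintro ⟨x, y⟩ hp
    obtain ⟨⟨h0, h1⟩, h2⟩ := mem_Sq.mp hp
    simp only at h0 h1 h2
    have : Int.fract (x / 2) = x / 2 := Int.fract_eq_self.mpr ⟨by linarith, by linarith⟩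
    simp only [ContinuousMap.coe_mk, G, this]
    rw [if_pos (by linarith), cy_self h2]
    congr 2; ring
  · intro x y
    have a0 := Int.fract_nonneg (x / 2)
    have a1 := Int.fract_lt_one (x / 2)
    have a2 := Int.floor_add_fract (x / 2)
    simp only [ContinuousMap.coe_mk, G, cy_neg, neg_neg]
    rcases lt_or_ge (Int.fract (x / 2)) (1/2) with h | h
    · have hz : Int.fract ((x + 1) / 2) = Int.fract (x / 2) + 1/2 := by
        rw [Int.fract_eq_iff]
        refine ⟨by linarith, by linarith, ⌊x / 2⌋, ?_⟩
        linarith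
      rw [hz, if_pos (show Int.fract (x / 2) - 1/2 ≤ 0 by linarith)]
      split_ifs with h3
      · have : Int.fract (x / 2) = 0 := by linarith
        rw [this]; norm_num
        exact (hE _ (cy_mem _)).symm
      · congr 2; ring
    · have hz : Int.fract ((x + 1) / 2) = Int.fract (x / 2) - 1/2 := by
        rw [Int.fract_eq_iff]
        refine ⟨by linarith, by linarith, ⌊x / 2⌋ + 1, ?_⟩
        push_cast
        linarith
      rw [hz, if_pos (by linarith)]
      split_ifs with h3
      · have : Int.fract (x / 2) = 1/2 := by linarith
        rw [this]; norm_num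
        rw [hE _ (neg_mem_I (cy_mem _)), neg_neg]
      · congr 2; ring
  · intro x y hy
    have a0 := Int.fract_nonneg (x / 2)
    have a1 := Int.fract_lt_one (x / 2)
    have hy' : cy y = y := cy_self (abs_le.mp hy.le)
    simp only [ContinuousMap.coe_mk, G]
    split_ifs with h
    · exact ⟨_, hmem _ _ (by linarith) (by linarith) (cy_mem _), by rw [hy']; exact hy, rfl⟩
    · refine ⟨_, hmem _ _ (by linarith) (by linarith) (neg_mem_I (cy_mem _)), ?_, rfl⟩
      simp only; rw [hy', abs_neg]; exact hy

/-! Lifting the angle. -/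

lemma exists_lift (F' : C(ℝ × ℝ, X)) (hper : ∀ x y, F' (x + 1, -y) = F' (x, y)) :
    ∃ t : C(ℝ × ℝ, ℝ), ∃ m : ℤ, (∀ p, Circle.exp (t p) = uX (F' p)) ∧
      ∀ x y, t (x + 1, -y) = t (x, y) + m * (2 * Real.pi) := by
  obtain ⟨e₀, he⟩ : ∃ e₀ : ℝ, Circle.exp e₀ = uX (F' (0, 0)) := ⟨_, Circle.exp_arg _⟩
  obtain ⟨t, ⟨ht0, ht⟩, -⟩ := Circle.isCoveringMap_exp.existsUnique_continuousMap_lifts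
    (uX.comp F') (0, 0) e₀ he
  have ht' : ∀ p, Circle.exp (t p) = uX (F' p) := fun p => congrFun ht p
  have h1 : Circle.exp (t (0 + 1, -0)) = Circle.exp (t (0, 0)) := by
    rw [ht', ht', hper]
  obtain ⟨m, hm⟩ := Circle.exp_eq_exp.mp h1
  let t2 : C(ℝ × ℝ, ℝ) := ⟨fun p => t (p.1 + 1, -p.2) - m * (2 * Real.pi), by fun_prop⟩
  have h2 : ∀ p, Circle.exp (t2 p) = uX (F' p) := by
    intro p
    have : uX (F' p) = Circle.exp (t (p.1 + 1, -p.2)) := by rw [ht', hper]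
    rw [this, Circle.exp_eq_exp]
    exact ⟨-m, by simp only [t2, ContinuousMap.coe_mk]; push_cast; ring⟩
  obtain ⟨w, -, hw⟩ := Circle.isCoveringMap_exp.existsUnique_continuousMap_lifts
    (uX.comp F') (0, 0) (t (0, 0)) (ht' _)
  have e1 : t = w := hw t ⟨rfl, ht⟩
  have e2 : t2 = w := by
    refine hw t2 ⟨?_, funext h2⟩
    simp only [t2, ContinuousMap.coe_mk]
    have := hm
    simp only [zero_add] at this ⊢
    linarith
  refine ⟨t, m, ht', fun x y => ?_⟩
  have : t2 (x, y) = t (x, y) := by rw [e2, e1]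
  simp only [t2, ContinuousMap.coe_mk] at this
  linarith

lemma lift_ne_zero (f : C(X, X)) (h12 : MapsTo f C1 C2) (he1 : Essential (restrictMap f h12))
    (t : ℝ × ℝ → ℝ) (ct : Continuous t) (ht : ∀ p ∈ Q, Circle.exp (t p) = uX (f (mk p)))
    (hE : ∀ y, t (0, y) = t (1, -y)) : False := by
  obtain ⟨T, hT⟩ := descend0 t ct.continuousOn (fun y _ => hE y)
  have hT' : ∀ x, Circle.exp (T x) = uX (f x) := by
    intro x
    obtain ⟨p, hp, rfl⟩ := exists_mk x
    rw [hT p hp, ht p hp]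
  obtain ⟨ψ, hψ⟩ := exists_psi
  apply he1
  refine ⟨ψ (Circle.exp 0), ⟨⟨⟨fun q => ψ (Circle.exp ((1 - (q.1 : ℝ)) * T q.2)), by fun_prop⟩, ?_, ?_⟩⟩⟩
  · intro x
    simp only [Set.Icc.coe_zero, sub_zero, one_mul, hT', ContinuousMap.toFun_eq_coe,
      ContinuousMap.coe_mk]
    exact hψ (restrictMap f h12 x)
  · intro x
    simp

lemma exists_T (f : C(X, X)) (h12 : MapsTo f C1 C2) (he1 : Essential (restrictMap f h12))
    (F' : C(ℝ × ℝ, X)) (hper : ∀ x y, F' (x + 1, -y) = F' (x, y))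
    (hF : ∀ p ∈ Q, F' p = f (mk p)) :
    ∃ T : C(ℝ × ℝ, ℝ), ∃ d : ℝ, 0 < d ∧ (∀ p, ∀ c : ℤ, T p = c * (2 * Real.pi) → uX (F' p) = 1) ∧
      ∀ x y, T (x + 1, -y) = T (x, y) + d := by
  obtain ⟨t, m, ht, hm⟩ := exists_lift F' hper
  have hm0 : m ≠ 0 := by
    rintro rfl
    refine lift_ne_zero f h12 he1 t t.continuous (fun p hp => by rw [ht, hF p hp]) fun y => ?_
    have := hm 0 y
    simpa using this.symm
  have hpi := Real.pi_pos
  have key : ∀ p, ∀ c : ℤ, t p = c * (2 * Real.pi) → uX (F' p) = 1 := by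
    intro p c hc
    rw [← ht, hc, ← Circle.exp_zero, Circle.exp_eq_exp]
    exact ⟨c, by ring⟩
  rcases lt_or_gt_of_ne hm0 with h | h
  · have h' : (m : ℝ) < 0 := by exact_mod_cast h
    refine ⟨-t, -m * (2 * Real.pi), by apply mul_pos <;> linarith, ?_, ?_⟩
    · intro p c hc
      refine key p (-c) ?_
      have : -t p = c * (2 * Real.pi) := hc
      push_cast
      linarith
    · intro x y
      have := hm x y
      show -t (x + 1, -y) = -t (x, y) + _
      rw [this]; ring
  · have h' : (0 : ℝ) < m := by exact_mod_cast h
    exact ⟨t, m * (2 * Real.pi), by positivity, key, hm⟩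

lemma exists_K (F' : C(ℝ × ℝ, X)) (hb : ∀ x y, |y| = 1 → F' (x, y) ∈ C2)
    (T : C(ℝ × ℝ, ℝ)) (d : ℝ) (hd : 0 < d)
    (hT : ∀ p, ∀ c : ℤ, T p = c * (2 * Real.pi) → uX (F' p) = 1)
    (hTd : ∀ x y, T (x + 1, -y) = T (x, y) + d) :
    ∃ K : C(ℝ × ℝ, X), (∀ y ∈ Icc (-1 : ℝ) 1, K (0, y) = F' (0, y)) ∧
      (∀ s y, |y| = 1 → K (s, y) ∈ C2) ∧ (∀ y, K (1, y) ∈ C2) := by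
  have hpi := Real.pi_pos
  obtain ⟨B, hB⟩ := isCompact_Sq.exists_bound_of_continuousOn T.continuous.continuousOn
  have hB' : ∀ x y, 0 ≤ x → x ≤ 1 → y ∈ Icc (-1 : ℝ) 1 → -B ≤ T (x, y) ∧ T (x, y) ≤ B :=
    fun x y h0 h1 hy => abs_le.mp (hB (x, y) (mem_Sq.mpr ⟨⟨h0, h1⟩, hy⟩))
  obtain ⟨c, hc⟩ := exists_int_gt (B / (2 * Real.pi))
  have hc' : B < c * (2 * Real.pi) := (div_lt_iff₀ (by positivity)).mp hc
  obtain ⟨n, hn⟩ := exists_nat_gt ((B + c * (2 * Real.pi)) / d)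
  have hn' : B + c * (2 * Real.pi) < n * d := (div_lt_iff₀ hd).mp hn
  have hgrow : ∀ k : ℕ, ∀ x y, 0 ≤ x → x ≤ 1 → y ∈ Icc (-1 : ℝ) 1 → -B + k * d ≤ T (x + k, y) := by
    intro k
    induction k with
    | zero => intro x y h0 h1 hy; simpa using (hB' x y h0 h1 hy).1
    | succ k ih =>
      intro x y h0 h1 hy
      have h2 := ih x (-y) h0 h1 (neg_mem_I hy)
      have h3 := hTd (x + k) (-y)
      rw [neg_neg, add_assoc] at h3
      push_cast
      rw [h3]; linarith
  let L : ℝ := n + 1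
  have hL : 0 < L := by positivity
  let a : ℝ × ℝ → ℝ × ℝ := fun p => (L * cl p.1, cy p.2)
  have ca : Continuous a := by fun_prop
  let τ : ℝ × ℝ → ℝ := fun p => T (a p) - c * (2 * Real.pi)
  have cτ : Continuous τ := by fun_prop
  have hτ0 : ∀ p, τ p = 0 → uX (F' (a p)) = 1 := by
    intro p hp
    exact hT _ c (by have : T (a p) - c * (2 * Real.pi) = 0 := hp
                     linarith)
  have hτpos : ∀ p, (n : ℝ) ≤ L * cl p.1 → 0 < τ p := by
    intro p hp
    have h1 := hgrow n (L * cl p.1 - n) (cy p.2) (by linarith)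
      (by have := cl_le_one p.1; have : L * cl p.1 ≤ L := by nlinarith
          simp only [L] at this ⊢; linarith) (cy_mem _)
    rw [sub_add_cancel] at h1
    show 0 < T (L * cl p.1, cy p.2) - c * (2 * Real.pi)
    linarith
  let R : ℝ × ℝ → X := fun p => jj (cl ((4 * absY (F' (a p)) - 1) / 3) * cl (L - L * cl p.1))
  have cR : Continuous R := by
    have := continuous_jj
    fun_prop
  have cK : Continuous fun p => if τ p ≤ 0 then F' (a p) else R p := by
    rw [← continuousOn_univ]
    refine glue (φ := τ) cτ (Continuous.continuousOn (by fun_prop)) cR.continuousOn ?_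
    intro p _ hp
    have h1 := hτ0 p hp
    have h2 : L * cl p.1 < n := by
      by_contra h
      have := hτpos p (not_lt.mp h)
      have hp : τ p = 0 := hp
      linarith
    simp only [R]
    rw [cl_one (x := L - L * cl p.1) (by simp only [L] at h2 ⊢; linarith), mul_one]
    have h3 := jj_of_u h1
    rw [jj] at h3 ⊢
    rw [cl_self (cl_nonneg _) (cl_le_one _), h3]
  refine ⟨⟨_, cK⟩, ?_, ?_, ?_⟩
  · intro y hy
    have ha : a (0, y) = (0, y) := by simp only [a, cl_zero le_rfl, cy_self hy, mul_zero]
    have := (hB' 0 y le_rfl zero_le_one hy).2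
    simp only [ContinuousMap.coe_mk, τ, ha]
    rw [if_pos (by linarith)]
  · intro s y hy
    have hF : F' (a (s, y)) ∈ C2 := hb _ _ (by simp only; rw [cy_self (abs_le.mp hy.le), hy])
    simp only [ContinuousMap.coe_mk]
    split_ifs
    · exact hF
    · apply jj_zero
      rw [mem_C2] at hF
      have := absY_le_NX (F' (a (s, y)))
      rw [cl_zero (x := (4 * absY (F' (a (s, y))) - 1) / 3) (by linarith), zero_mul]
  · intro y
    have h1 : cl (1 : ℝ) = 1 := cl_one le_rfl
    have := hτpos (1, y) (by simp only [h1, L]; linarith)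
    simp only [ContinuousMap.coe_mk]
    rw [if_neg (by linarith)]
    apply jj_zero
    simp only [h1, mul_one, sub_self]
    rw [cl_zero (x := 0) le_rfl, mul_zero]

lemma exists_E (F' : C(ℝ × ℝ, X)) (hper : ∀ x y, F' (x + 1, -y) = F' (x, y))
    (hb : ∀ x y, |y| = 1 → F' (x, y) ∈ C2)
    (K : C(ℝ × ℝ, X)) (hK0 : ∀ y ∈ Icc (-1 : ℝ) 1, K (0, y) = F' (0, y))
    (hKb : ∀ s y, |y| = 1 → K (s, y) ∈ C2) (hK1 : ∀ y, K (1, y) ∈ C2) :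
    ∃ E : C(ℝ × ℝ, X), (∀ p ∈ Sq, E p = F' p) ∧
      (∀ s y, 0 ≤ s → y ∈ Icc (-1 : ℝ) 1 → E (-s, y) = E (1 + s, -y)) ∧
      (∀ x y, |y| = 1 → E (x, y) ∈ C2) ∧ (∀ y, E (-1, y) ∈ C2) ∧ (∀ y, E (2, y) ∈ C2) := by
  have hF1 : ∀ y, F' (1, y) = F' (0, -y) := by
    intro y
    have := hper 0 (-y)
    rwa [zero_add, neg_neg] at this
  have c1 : Continuous fun p : ℝ × ℝ =>
      if p.1 - 1 ≤ 0 then F' (p.1, cy p.2) else K (p.1 - 1, -cy p.2) := by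
    rw [← continuousOn_univ]
    refine glue (φ := fun p : ℝ × ℝ => p.1 - 1) (by fun_prop)
      (Continuous.continuousOn (by fun_prop)) (Continuous.continuousOn (by fun_prop)) ?_
    rintro ⟨x, y⟩ - hx
    have hx : x - 1 = 0 := hx
    have : x = 1 := by linarith
    subst this
    simp only [sub_self]
    rw [hK0 _ (neg_mem_I (cy_mem _)), hF1]
  have c2 : Continuous fun p : ℝ × ℝ => if p.1 ≤ 0 then K (-p.1, cy p.2) else
      if p.1 - 1 ≤ 0 then F' (p.1, cy p.2) else K (p.1 - 1, -cy p.2) := by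
    rw [← continuousOn_univ]
    refine glue (φ := fun p : ℝ × ℝ => p.1) (by fun_prop)
      (Continuous.continuousOn (by fun_prop)) c1.continuousOn ?_
    rintro ⟨x, y⟩ - hx
    have hx : x = 0 := hx
    subst hx
    simp only
    rw [if_pos (by norm_num), neg_zero, hK0 _ (cy_mem _)]
  refine ⟨⟨_, c2⟩, ?_, ?_, ?_, ?_, ?_⟩
  · rintro ⟨x, y⟩ hp
    obtain ⟨⟨h0, h1⟩, h2⟩ := mem_Sq.mp hp
    simp only at h0 h1 h2
    simp only [ContinuousMap.coe_mk, cy_self h2]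
    split_ifs with h3 h4
    · have : x = 0 := by linarith
      subst this
      rw [neg_zero, hK0 _ h2]
    · rfl
    · exact absurd h1 (by linarith)
  · intro s y hs hy
    simp only [ContinuousMap.coe_mk]
    rw [if_pos (by linarith), if_neg (by linarith), cy_neg, cy_self hy]
    split_ifs with h3
    · have : s = 0 := by linarith
      subst this
      rw [neg_zero, neg_zero, add_zero, hK0 _ hy, hF1, neg_neg]
    · congr 2 <;> ring
  · intro x y hy
    have hy1 : |cy y| = 1 := by rw [cy_self (abs_le.mp hy.le), hy]
    simp only [ContinuousMap.coe_mk]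
    split_ifs
    · exact hKb _ _ hy1
    · exact hb _ _ hy1
    · exact hKb _ _ (by rw [abs_neg, hy1])
  · intro y
    simp only [ContinuousMap.coe_mk]
    rw [if_pos (by norm_num), neg_neg]
    exact hK1 _
  · intro y
    simp only [ContinuousMap.coe_mk]
    rw [if_neg (by norm_num), if_neg (by norm_num), show (2 - 1 : ℝ) = 1 by norm_num]
    exact hK1 _

/-! The deformation on the filled band. -/

def P2 (x : ℝ) : ℝ := min 1 (min (3 * x) (3 - 3 * x))
def mu (y : ℝ) : ℝ := max 0 (2 * y - 1) + min 0 (2 * y + 1)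
def Th1 (s x : ℝ) : ℝ := (1 - s) * x + s * cl (3 * x - 1)
def AT (s x : ℝ) : ℝ := (1 - s) * Th1 s x + s * (3 * Th1 s x - 1)
def Th2 (s x y : ℝ) : ℝ := (1 - s) * y + s * (P2 x * (1 - |mu y|) + mu y)

lemma mu_neg (y : ℝ) : mu (-y) = -mu y := by
  unfold mu
  rcases le_total y (-(1/2)) with h | h <;> rcases le_total y (1/2) with h1 | h1
  · rw [max_eq_right (by linarith), min_eq_left (by linarith), max_eq_left (by linarith),
      min_eq_right (by linarith)]; ring
  · linarith
  · rw [max_eq_left (by linarith), min_eq_left (by linarith), max_eq_left (by linarith),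
      min_eq_left (by linarith)]; ring
  · rw [max_eq_left (by linarith), min_eq_right (by linarith), max_eq_right (by linarith),
      min_eq_left (by linarith)]; ring

lemma mu_one : mu 1 = 1 := by norm_num [mu]
lemma mu_zero {y : ℝ} (h : |y| ≤ 1/2) : mu y = 0 := by
  rw [abs_le] at h
  rw [mu, max_eq_left (by linarith), min_eq_left (by linarith)]; ring

lemma mu_mem {y : ℝ} (h : y ∈ Icc (-1 : ℝ) 1) : mu y ∈ Icc (-1 : ℝ) 1 := by
  obtain ⟨h0, h1⟩ := h
  unfold mu
  constructor
  · have a : 0 ≤ max 0 (2 * y - 1) := le_max_left _ _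
    have b : -1 ≤ min 0 (2 * y + 1) := le_min (by norm_num) (by linarith)
    linarith
  · have a : max 0 (2 * y - 1) ≤ 1 := max_le (by norm_num) (by linarith)
    have b : min 0 (2 * y + 1) ≤ 0 := min_le_left _ _
    linarith

lemma exists_G (E : C(ℝ × ℝ, X))
    (hedge : ∀ s y, 0 ≤ s → y ∈ Icc (-1 : ℝ) 1 → E (-s, y) = E (1 + s, -y))
    (hb : ∀ x y, |y| = 1 → E (x, y) ∈ C2) (hm : ∀ y, E (-1, y) ∈ C2) (h2 : ∀ y, E (2, y) ∈ C2) :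
    ∃ G : C(ℝ × (ℝ × ℝ), X), (∀ p, G (0, p) = E p) ∧
      (∀ s ∈ Icc (0 : ℝ) 1, ∀ y ∈ Icc (-1 : ℝ) 1, G (s, (0, y)) = G (s, (1, -y))) ∧
      (∀ s x y, |y| = 1 → G (s, (x, y)) ∈ C2) ∧
      (∀ x y, |y| ≤ 1/2 → G (1, (x, y)) ∈ C2) := by
  refine ⟨⟨fun q => E (AT q.1 q.2.1, Th2 q.1 q.2.1 q.2.2), ?_⟩, ?_, ?_, ?_, ?_⟩
  · unfold AT Th1 Th2 P2 mu
    fun_prop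
  · rintro ⟨x, y⟩
    simp [AT, Th1, Th2]
  · intro s hs y hy
    have e1 : AT s 0 = -s := by
      simp only [AT, Th1]; rw [cl_zero (by norm_num)]; ring
    have e2 : AT s 1 = 1 + s := by
      simp only [AT, Th1]; rw [cl_one (by norm_num)]; ring
    have e3 : P2 0 = 0 := by norm_num [P2]
    have e4 : P2 1 = 0 := by norm_num [P2]
    have e5 : Th2 s 0 y = (1 - s) * y + s * mu y := by simp only [Th2, e3]; ring
    have e6 : Th2 s 1 (-y) = -((1 - s) * y + s * mu y) := by simp only [Th2, e4, mu_neg]; ring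
    simp only [ContinuousMap.coe_mk]
    rw [e1, e2, e5, e6]
    refine hedge _ _ hs.1 ?_
    have h1 := mu_mem hy
    obtain ⟨a, b⟩ := hs
    obtain ⟨h3, h4⟩ := h1
    obtain ⟨h5, h6⟩ := hy
    constructor <;> nlinarith
  · intro s x y hy
    apply hb
    rcases (abs_eq zero_le_one).mp hy with rfl | rfl
    · have : Th2 s x 1 = 1 := by simp only [Th2, mu_one]; norm_num
      simp [this]
    · have : Th2 s x (-1) = -1 := by simp only [Th2, mu_neg, mu_one]; norm_num; ring
      simp [this]
  · intro x y hy
    have h3 : Th2 1 x y = P2 x := by simp [Th2, mu_zero hy]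
    have h4 : AT 1 x = 3 * cl (3 * x - 1) - 1 := by simp [AT, Th1]
    simp only [ContinuousMap.coe_mk, h3, h4]
    rcases le_total x (1/3) with h | h
    · rw [cl_zero (by linarith)]
      norm_num
      exact hm _
    rcases le_total x (2/3) with h' | h'
    · apply hb
      rw [P2, min_eq_left (le_min (by linarith) (by linarith)), abs_one]
    · rw [cl_one (by linarith)]
      norm_num
      exact h2 _

/-! The final homotopy. -/

def al (p : ℝ × ℝ) : ℝ := cl (16 * (NN p - 1/4))
def be (p : ℝ × ℝ) : ℝ := cl (16 * (3/8 - NN p))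
def ee (s : ℝ) (p : ℝ × ℝ) : ℝ × ℝ := rs (1 - s + s * cl (8 * NN p - 3)) p

lemma exists_final (f : C(X, X)) (h12 : MapsTo f C1 C2) (F : ℝ × ℝ → X)
    (hF : ∀ p ∈ Q, F p = f (mk p)) (hF1 : ∀ p, NN p ≤ 1/4 → F p ∈ C1)
    (G : C(ℝ × (ℝ × ℝ), X)) (hG0 : ∀ p ∈ Sq, G (0, p) = F p)
    (hGe : ∀ s ∈ Icc (0 : ℝ) 1, ∀ y ∈ Icc (-1 : ℝ) 1, G (s, (0, y)) = G (s, (1, -y)))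
    (hGb : ∀ s x y, |y| = 1 → G (s, (x, y)) ∈ C2)
    (hG1 : ∀ x y, |y| ≤ 1/2 → G (1, (x, y)) ∈ C2) :
    ∃ g : C(X, X), BoundaryHomotopic f g ∧ ∃ x₀ : X, {x : X | g x = x} = {x₀} := by
  have cN := continuous_NN
  let h : ℝ × (ℝ × ℝ) → X := fun q =>
    Pi (cI (q.1 * be q.2), Lam (cI (q.1 * al q.2), G (q.1 * al q.2, ee q.1 q.2)))
  have ch : Continuous h := by
    simp only [h]; unfold be al ee rs; fun_prop
  have far : ∀ s p, 1/2 ≤ NN p → h (s, p) = Lam (cI s, G (s, p)) := by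
    intro s p hp
    have h1 : al p = 1 := cl_one (by linarith)
    have h2 : be p = 0 := cl_zero (by linarith)
    have h3 : ee s p = p := by
      rw [ee, cl_one (by linarith), mul_one, sub_add_cancel, rs_one]
    simp only [h, h1, h2, h3, mul_zero, mul_one]
    rw [cI_zero le_rfl, Pi_zero]
  obtain ⟨H, hH⟩ := descend h ch.continuousOn (by
    intro s hs y hy
    rw [far _ _ (NN_edge0 y), far _ _ (NN_edge1 (-y)), hGe s hs y hy])
  have H0 : ∀ x, H (0, x) = f x := by
    intro x
    obtain ⟨p, hp, rfl⟩ := exists_mk x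
    rw [hH 0 p hp]
    simp only [h, Set.Icc.coe_zero, zero_mul]
    rw [cI_zero le_rfl, Pi_zero, Lam_zero, ee, sub_zero, zero_mul, add_zero, rs_one, hG0 p hp.1, hF p hp]
  let g : C(X, X) := ⟨fun x => H (1, x), by fun_prop⟩
  refine ⟨g, ⟨⟨H, H0, fun x => rfl⟩, ?_⟩, ?_⟩
  · -- boundary
    intro x hx t
    show H (t, x) ∈ Bd
    obtain ⟨p, hp, rfl⟩ := exists_mk x
    rw [hH t p hp]
    rcases hx with hx | hx
    · have hy : |p.2| = 1 := by
        rcases (mem_C1_mk hp).mp hx with h | h <;> rw [h] <;> norm_num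
      have := abs2_le p
      rw [far _ _ (by linarith)]
      have h3 : G ((t : ℝ), p) ∈ C2 := hGb _ p.1 p.2 hy
      rw [Lam_C2 _ h3]
      exact Or.inr h3
    · have hN := (mem_C2_mk hp).mp hx
      have t0 := t.2.1
      have t1 := t.2.2
      have h1 : al p = 0 := cl_zero (by linarith)
      have h3 : NN (ee t p) ≤ 1/4 := by
        rw [ee, cl_zero (by linarith), mul_zero, add_zero, NN_rs (by linarith), hN]
        linarith
      simp only [h, h1, mul_zero]
      rw [cI_zero (x := 0) le_rfl, Lam_zero, hG0 _ (mem_Sq_of_NN (by linarith)),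
        Pi_C1 _ (hF1 _ h3)]
      exact Or.inl (hF1 _ h3)
  · -- fixed points
    have hg : ∀ p ∈ Q, g (mk p) = h (1, p) := fun p hp => hH 1 p hp
    have hc : G (1, (1/2, 0)) ∈ C2 := hG1 _ _ (by norm_num)
    obtain ⟨q0, hq0, hq⟩ := exists_mk (G (1, (1/2, 0)))
    have hN0 : NN q0 = 1/4 := by rw [← hq] at hc; exact (mem_C2_mk hq0).mp hc
    -- the value on the middle collar
    have mid : ∀ p, 5/16 ≤ NN p → NN p ≤ 3/8 →
        h (1, p) = mk (rs (1 + 16 * (3/8 - NN p) / 2) q0) := by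
      intro p h1 h2
      have e1 : al p = 1 := cl_one (by linarith)
      have e2 : be p = 16 * (3/8 - NN p) := cl_self (by linarith) (by linarith)
      have e3 : ee 1 p = (1/2, 0) := by
        rw [ee, cl_zero (by linarith)]; simp [rs]
      simp only [h, e1, e2, e3, one_mul]
      rw [Lam_C2 _ hc, ← hq, Pi_C2 _ hq0 hN0]
      congr 2
      show 1 + cl _ / 2 = _
      rw [cl_self (by linarith) (by linarith)]
    have memQ : ∀ k : ℝ, 1 ≤ k → k ≤ 3/2 → rs k q0 ∈ Q ∧ NN (rs k q0) = k / 4 := by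
      intro k h1 h2
      have : NN (rs k q0) = k / 4 := by rw [NN_rs (by linarith), hN0]; ring
      exact ⟨⟨mem_Sq_of_NN (by linarith), by linarith⟩, this⟩
    refine ⟨mk (rs (4/3) q0), ?_⟩
    ext x
    rw [mem_singleton_iff]
    constructor
    · intro hx
      have hx : g x = x := hx
      obtain ⟨p, hp, rfl⟩ := exists_mk x
      rw [hg p hp] at hx
      rcases le_total (NN p) (5/16) with h1 | h1
      · exfalso
        have e2 : be p = 1 := cl_one (by linarith)
        have h3 := NX_mk hp
        rw [← hx] at h3
        simp only [h, e2, one_mul] at h3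
        rw [cI_one le_rfl] at h3
        have := NX_Pi (Lam (cI (al p), G (al p, ee 1 p)))
        linarith
      rcases le_total (3/8) (NN p) with h2 | h2
      · exfalso
        have e1 : al p = 1 := cl_one (by linarith)
        have e2 : be p = 0 := cl_zero (by linarith)
        simp only [h, e1, e2, mul_zero, one_mul] at hx
        rw [cI_zero le_rfl, Pi_zero, cI_one le_rfl] at hx
        have h3 := absY_Lam (G (1, ee 1 p))
        rw [hx, absY_mk hp] at h3
        have h4 : G (1, ee 1 p) ∈ C2 := by
          refine hG1 _ _ ?_
          have a0 := cl_nonneg (8 * NN p - 3)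
          have a1 := cl_le_one (8 * NN p - 3)
          rw [show (1 : ℝ) - 1 + 1 * cl (8 * NN p - 3) = cl (8 * NN p - 3) by ring, abs_mul,
            abs_of_nonneg a0]
          have := abs_nonneg p.2
          nlinarith
        rw [Lam_C2 _ h4] at hx
        rw [hx, mem_C2_mk hp] at h4
        linarith
      · rw [mid p h1 h2] at hx
        obtain ⟨m1, m2⟩ := memQ (1 + 16 * (3/8 - NN p) / 2) (by linarith) (by linarith)
        have h5 := mk_inj m1 hp hx (by rw [m2]; linarith)
        have h6 : NN p = (1 + 16 * (3/8 - NN p) / 2) / 4 := by rw [← m2, h5]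
        have h7 : NN p = 1/3 := by linarith
        rw [← hx, h7]
        congr 2
        norm_num
    · rintro rfl
      show g _ = _
      obtain ⟨m1, m2⟩ := memQ (4/3) (by norm_num) (by norm_num)
      have m3 : NN (rs (4/3) q0) = 1/3 := by rw [m2]; norm_num
      rw [hg _ m1, mid _ (by rw [m3]; norm_num) (by rw [m3]; norm_num), m3]
      congr 2
      norm_num

end

/-- A boundary semi-essential map of the punctured Möbius band interchanging the
boundary circles, with `f|C₁ : C₁ → C₂` essential and `f|C₂` inessential, is
boundary-homotopic to a map with exactly one fixed point. -/
theorem stmt_12 (f : C(X, X)) (hf : BoundaryPreserving f)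
    (h12 : MapsTo f C1 C2) (h21 : MapsTo f C2 C1)
    (he1 : Essential (restrictMap f h12))
    (h2 : Inessential (restrictMap f (h21.mono_right Set.subset_union_left : MapsTo f C2 Bd))) :
    ∃ g : C(X, X), BoundaryHomotopic f g ∧ ∃ x₀ : X, {x : X | g x = x} = {x₀} := by
  obtain ⟨F, cF, hFQ, hF1⟩ := exists_F f h21 h2
  have hFe : ∀ y ∈ Icc (-1 : ℝ) 1, F (0, y) = F (1, -y) := by
    intro y hy
    rw [hFQ _ (mem_Q0 hy), hFQ _ (mem_Q1 (neg_mem_I hy)), mk_edge hy]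
  obtain ⟨F', hF', hper, hFb⟩ := exists_strip F cF hFe
  have hb : ∀ x y, |y| = 1 → F' (x, y) ∈ C2 := by
    intro x y hy
    obtain ⟨p, hp, hp1, hp2⟩ := hFb x y hy
    have hpQ : p ∈ Q := ⟨hp, by have := abs2_le p; linarith⟩
    rw [hp2, hFQ p hpQ]
    apply h12
    rw [mem_C1_mk hpQ]
    exact (abs_eq zero_le_one).mp hp1
  obtain ⟨T, d, hd, hT, hTd⟩ := exists_T f h12 he1 F' hper
    (fun p hp => by rw [hF' p hp.1, hFQ p hp])
  obtain ⟨K, hK0, hKb, hK1⟩ := exists_K F' hb T d hd hT hTd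
  obtain ⟨E, hES, hEe, hEb, hEm, hE2⟩ := exists_E F' hper hb K hK0 hKb hK1
  obtain ⟨G, hG0, hGe, hGb, hG1⟩ := exists_G E hEe hEb hEm hE2
  exact exists_final f h12 F hFQ hF1 G (fun p hp => by rw [hG0, hES p hp, hF' p hp]) hGe hGb hG1

end PMB
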